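/- Two strings P[1..m] and S[1..m] over linearly ordered alphabets have the same Cartesian tree, CT(P) = CT(S), if and only if PP_P(i) = PP_S(i) for all 1 ≤ i ≤ m. (The prefix-parent representation is in one-to-one correspondence with the Cartesian tree.) -/

import Mathlib

/-!
The prefix parent makes sense inside any finite set `F` of positions (`ParentIn`), and for every
`F` the Cartesian tree on `F` and the prefix-parent relation on `F` determine each other
(`ctAux_eq_iff`); taking `F` to be all positions gives the theorem. This goes by induction on `F`,
with `m` the `≺`-minimum of `F`.

From prefix parents to the tree: `m` is the last position of `F` without a prefix parent, so the
relation determines the root (`minPos_le_minPos`), and it restricts to the relations on the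
positions left and right of `m` (`parentIn_left`, `parentIn_right`).

From the tree to prefix parents: no prefix-parent pair straddles `m`, and a position right of `m`
has prefix parent `m` exactly when it has none among the positions right of `m`, so the root and
the relations on the two sides determine the relation on `F` (`parentIn_split`).
-/

namespace CTM

variable {α : Type*} [LinearOrder α] {n : ℕ}

/-- `S[i] ≺ S[j]`: strict order on positions, values compared first, ties broken
toward the smaller index. -/
def prec (S : Fin n → α) (i j : Fin n) : Prop :=
  S i < S j ∨ (S i = S j ∧ i < j)

instance (S : Fin n → α) (i j : Fin n) : Decidable (prec S i j) :=
  inferInstanceAs (Decidable (_ ∨ _))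

/-- `S[i] ⪯ S[j]`. -/
def preceq (S : Fin n → α) (i j : Fin n) : Prop :=
  i = j ∨ prec S i j

/-- The set `{j : j < i and S[j] ≺ S[i]}`. -/
def PPset (S : Fin n → α) (i : Fin n) : Finset (Fin n) :=
  Finset.univ.filter (fun j => j < i ∧ prec S j i)

/-- Prefix-parent representation. -/
def PP (S : Fin n → α) (i : Fin n) : Fin n :=
  if h : (PPset S i).Nonempty then (PPset S i).max' h else i

lemma PP_le (S : Fin n → α) (i : Fin n) : PP S i ≤ i := by
  unfold PP
  split
  · next h =>
      have hm := (PPset S i).max'_mem h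
      simp only [PPset, Finset.mem_filter] at hm
      exact le_of_lt hm.2.1
  · exact le_refl i

/-- The ≺-minimum position of a nonempty finite set of positions. -/
noncomputable def minPos (S : Fin n → α) (F : Finset (Fin n)) (h : F.Nonempty) : Fin n :=
  (F.exists_min_image (fun j => toLex (S j, j)) h).choose

lemma minPos_mem (S : Fin n → α) (F : Finset (Fin n)) (h : F.Nonempty) :
    minPos S F h ∈ F :=
  (F.exists_min_image (fun j => toLex (S j, j)) h).choose_spec.1

/-- Prefix-child representation (0-indexed: position `0` is the first position). -/
noncomputable def PC (S : Fin n → α) (i : Fin n) : Fin n :=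
  if h0 : i.val = 0 then i
  else if h1 : PP S i = i then
    minPos S (Finset.univ.filter (fun j => j < i))
      ⟨⟨0, i.pos⟩, Finset.mem_filter.mpr ⟨Finset.mem_univ _, by
        simp only [Fin.lt_def]; omega⟩⟩
  else if _h2 : (PP S i).val + 1 = i.val then i
  else
    minPos S (Finset.univ.filter (fun j => PP S i < j ∧ j < i))
      ⟨⟨(PP S i).val + 1, by
          have h3 : (PP S i).val < i.val := Fin.lt_def.mp (lt_of_le_of_ne (PP_le S i) h1)
          have h4 := i.isLt
          omega⟩,
        Finset.mem_filter.mpr ⟨Finset.mem_univ _, by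
          have h3 : (PP S i).val < i.val := Fin.lt_def.mp (lt_of_le_of_ne (PP_le S i) h1)
          constructor <;> simp only [Fin.lt_def] <;> omega⟩⟩

/-- Global-parent representation. -/
noncomputable def GP (S : Fin n → α) (i : Fin n) : Fin n :=
  if h : ∃ j, i < j ∧ PC S j = i then h.choose else PP S i

/-- Binary trees whose nodes are positions of a string of length `n`. -/
inductive PosTree (n : ℕ) where
  | nil : PosTree n
  | node : Fin n → PosTree n → PosTree n → PosTree n

/-- The Cartesian tree of the restriction of `S` to a finite set of positions. -/
noncomputable def CTAux (S : Fin n → α) (F : Finset (Fin n)) : PosTree n :=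
  if h : F.Nonempty then
    PosTree.node (minPos S F h)
      (CTAux S (F.filter (fun j => j < minPos S F h)))
      (CTAux S (F.filter (fun j => minPos S F h < j)))
  else PosTree.nil
termination_by F.card
decreasing_by
  · exact Finset.card_lt_card
      (Finset.filter_ssubset.mpr ⟨minPos S F h, minPos_mem S F h, by simp⟩)
  · exact Finset.card_lt_card
      (Finset.filter_ssubset.mpr ⟨minPos S F h, minPos_mem S F h, by simp⟩)

/-- The Cartesian tree of a string, as a binary tree on positions. -/
noncomputable def CT (S : Fin n → α) : PosTree n :=
  CTAux S Finset.univ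

/-- Parent-distance representation. -/
def PD (S : Fin n → α) (i : Fin n) : ℕ :=
  if h : (PPset S i).Nonempty then i.val - ((PPset S i).max' h).val else 0


/-- `j` is the prefix parent of `i` within the set of positions `F`: the nearest position of `F`
to the left of `i` whose value is at most `S i`. For positions to the left of `i` the tie-breaking
rule makes `prec S j i` the same as `S j ≤ S i`, which is the form used here. -/
def ParentIn (S : Fin n → α) (F : Finset (Fin n)) (j i : Fin n) : Prop :=
  j ∈ F ∧ i ∈ F ∧ j < i ∧ S j ≤ S i ∧ ∀ k ∈ F, j < k → k < i → S i < S k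

lemma prec_iff_le {S : Fin n → α} {i j : Fin n} (h : j < i) : prec S j i ↔ S j ≤ S i := by
  simp [prec, h, le_iff_lt_or_eq]

lemma minPos_lt {S : Fin n → α} {F : Finset (Fin n)} (h : F.Nonempty) {k : Fin n}
    (hk : k ∈ F) (hlt : k < minPos S F h) : S (minPos S F h) < S k := by
  have := (F.exists_min_image (fun j => toLex (S j, j)) h).choose_spec.2 k hk
  change toLex (S (minPos S F h), minPos S F h) ≤ _ at this
  rw [Prod.Lex.toLex_le_toLex] at this
  rcases this with h1 | h1
  · exact h1
  · exact absurd h1.2 (not_le.2 hlt)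

lemma minPos_le {S : Fin n → α} {F : Finset (Fin n)} (h : F.Nonempty) {k : Fin n}
    (hk : k ∈ F) : S (minPos S F h) ≤ S k := by
  have := (F.exists_min_image (fun j => toLex (S j, j)) h).choose_spec.2 k hk
  change toLex (S (minPos S F h), minPos S F h) ≤ _ at this
  rw [Prod.Lex.toLex_le_toLex] at this
  rcases this with h1 | h1
  · exact h1.le
  · exact h1.1.le

lemma exists_parentIn {S : Fin n → α} {F : Finset (Fin n)} {i j : Fin n} (hj : j ∈ F)
    (hi : i ∈ F) (hlt : j < i) (hle : S j ≤ S i) : ∃ k, ParentIn S F k i := by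
  obtain ⟨k, hk, hmax⟩ := (F.filter fun k => k < i ∧ S k ≤ S i).exists_max_image id
    ⟨j, by simp [*]⟩
  simp only [Finset.mem_filter, id] at hk hmax
  refine ⟨k, hk.1, hi, hk.2.1, hk.2.2, fun l hl hkl hli => ?_⟩
  by_contra! hc
  exact absurd (hmax l ⟨hl, hli, hc⟩) (not_le.2 hkl)

lemma ParentIn.unique {S : Fin n → α} {F : Finset (Fin n)} {i j k : Fin n}
    (hj : ParentIn S F j i) (hk : ParentIn S F k i) : j = k := by
  obtain ⟨hj, -, hji, hjle, hj'⟩ := hj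
  obtain ⟨hk, -, hki, hkle, hk'⟩ := hk
  rcases lt_trichotomy j k with h | h | h
  · exact absurd (hj' k hk h hki) (not_lt.2 hkle)
  · exact h
  · exact absurd (hk' j hj h hji) (not_lt.2 hjle)

lemma not_parentIn_minPos (S : Fin n → α) {F : Finset (Fin n)} (h : F.Nonempty) (j : Fin n) :
    ¬ ParentIn S F j (minPos S F h) := fun hj =>
  absurd (minPos_lt h hj.1 hj.2.2.1) (not_lt.2 hj.2.2.2.1)

/-- The root of the Cartesian tree is the last position without a prefix parent, so prefix parents
determine it; this is one half of that comparison. -/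
lemma minPos_le_minPos {β : Type*} [LinearOrder β] {P : Fin n → α} {S : Fin n → β}
    {F : Finset (Fin n)} (h : F.Nonempty)
    (hPS : ∀ j i, ParentIn P F j i ↔ ParentIn S F j i) : minPos S F h ≤ minPos P F h := by
  by_contra! hlt
  obtain ⟨k, hk⟩ := exists_parentIn (minPos_mem P F h) (minPos_mem S F h) hlt
    (minPos_le h (minPos_mem S F h))
  exact not_parentIn_minPos S h k ((hPS _ _).1 hk)

lemma parentIn_left (S : Fin n → α) (F : Finset (Fin n)) (m j i : Fin n) :
    ParentIn S (F.filter (· < m)) j i ↔ ParentIn S F j i ∧ i < m := by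
  simp only [ParentIn, Finset.mem_filter]
  constructor
  · rintro ⟨⟨a, b⟩, ⟨c, d⟩, e, f, g⟩
    exact ⟨⟨a, c, e, f, fun k hk h1 h2 => g k ⟨hk, h2.trans d⟩ h1 h2⟩, d⟩
  · rintro ⟨⟨a, c, e, f, g⟩, d⟩
    exact ⟨⟨a, e.trans d⟩, ⟨c, d⟩, e, f, fun k hk => g k hk.1⟩

lemma parentIn_right (S : Fin n → α) (F : Finset (Fin n)) (m j i : Fin n) :
    ParentIn S (F.filter (m < ·)) j i ↔ ParentIn S F j i ∧ m < j := by
  simp only [ParentIn, Finset.mem_filter]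
  constructor
  · rintro ⟨⟨a, b⟩, ⟨c, d⟩, e, f, g⟩
    exact ⟨⟨a, c, e, f, fun k hk h1 h2 => g k ⟨hk, b.trans h1⟩ h1 h2⟩, b⟩
  · rintro ⟨⟨a, c, e, f, g⟩, d⟩
    exact ⟨⟨a, d⟩, ⟨c, d.trans e⟩, e, f, fun k hk => g k hk.1⟩

/-- The prefix parents in `F` are recovered from the root and the prefix parents in the two
subtrees: a position right of the root with no prefix parent in the right subtree has the root as
its prefix parent, and no prefix-parent pair straddles the root. -/
lemma parentIn_split (S : Fin n → α) {F : Finset (Fin n)} (h : F.Nonempty) (j i : Fin n) :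
    ParentIn S F j i ↔
      ParentIn S (F.filter (· < minPos S F h)) j i ∨
      ParentIn S (F.filter (minPos S F h < ·)) j i ∨
      (j = minPos S F h ∧ minPos S F h < i ∧ i ∈ F ∧
        ∀ k, ¬ ParentIn S (F.filter (minPos S F h < ·)) k i) := by
  constructor
  · intro hji
    rcases lt_trichotomy i (minPos S F h) with hi | hi | hi
    · exact Or.inl ((parentIn_left ..).2 ⟨hji, hi⟩)
    · exact absurd (hi ▸ hji) (not_parentIn_minPos S h j)
    rcases lt_trichotomy (minPos S F h) j with hj | hj | hj
    · exact Or.inr (Or.inl ((parentIn_right ..).2 ⟨hji, hj⟩))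
    · refine Or.inr (Or.inr ⟨hj.symm, hi, hji.2.1, fun k hk => ?_⟩)
      obtain ⟨hk, hlt⟩ := (parentIn_right ..).1 hk
      exact absurd (hj.trans (hji.unique hk)) hlt.ne
    · exact absurd (hji.2.2.2.2 _ (minPos_mem S F h) hj hi) (not_lt.2 (minPos_le h hji.2.1))
  · rintro (hji | hji | ⟨rfl, hi, hiF, hno⟩)
    · exact ((parentIn_left ..).1 hji).1
    · exact ((parentIn_right ..).1 hji).1
    · refine ⟨minPos_mem S F h, hiF, hi, minPos_le h hiF, fun k hk h1 h2 => ?_⟩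
      by_contra! hc
      obtain ⟨l, hl⟩ := exists_parentIn (F := F.filter (minPos S F h < ·))
        (Finset.mem_filter.2 ⟨hk, h1⟩) (Finset.mem_filter.2 ⟨hiF, hi⟩) h2 hc
      exact hno l hl

lemma ctAux_eq_iff {β : Type*} [LinearOrder β] (P : Fin n → α) (S : Fin n → β)
    (F : Finset (Fin n)) :
    CTAux P F = CTAux S F ↔ ∀ j i, ParentIn P F j i ↔ ParentIn S F j i := by
  induction F using Finset.strongInduction with
  | H F ih =>
    by_cases h : F.Nonempty
    · have ihl := ih (F.filter (· < minPos P F h))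
        (Finset.filter_ssubset.2 ⟨minPos P F h, minPos_mem P F h, by simp⟩)
      have ihr := ih (F.filter (minPos P F h < ·))
        (Finset.filter_ssubset.2 ⟨minPos P F h, minPos_mem P F h, by simp⟩)
      rw [CTAux, CTAux, dif_pos h, dif_pos h, PosTree.node.injEq]
      constructor
      · rintro ⟨hm, hl, hr⟩ j i
        rw [← hm] at hl hr
        rw [parentIn_split P h, parentIn_split S h, ← hm]
        simp only [ihl.1 hl, ihr.1 hr]
      · intro hPS
        have hm : minPos P F h = minPos S F h :=
          le_antisymm (minPos_le_minPos h fun j i => (hPS j i).symm) (minPos_le_minPos h hPS)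
        rw [← hm]
        refine ⟨rfl, ihl.2 fun j i => ?_, ihr.2 fun j i => ?_⟩
        · rw [parentIn_left, parentIn_left, hPS]
        · rw [parentIn_right, parentIn_right, hPS]
    · rw [Finset.not_nonempty_iff_eq_empty] at h
      subst h
      simp [CTAux, ParentIn]

/-- `PP` is the function with graph `ParentIn` on the full set of positions; the value `PP S i = i`
encodes that `i` has no prefix parent and is excluded by `j ≠ i`. -/
lemma parentIn_univ_iff (S : Fin n → α) (j i : Fin n) :
    ParentIn S Finset.univ j i ↔ PP S i = j ∧ j ≠ i := by
  have mem (k : Fin n) : k ∈ PPset S i ↔ k < i ∧ S k ≤ S i := by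
    simp only [PPset, Finset.mem_filter, Finset.mem_univ, true_and]
    exact and_congr_right prec_iff_le
  have key (h : (PPset S i).Nonempty) :
      ParentIn S Finset.univ ((PPset S i).max' h) i := by
    obtain ⟨hlt, hle⟩ := (mem _).1 ((PPset S i).max'_mem h)
    refine ⟨Finset.mem_univ _, Finset.mem_univ _, hlt, hle, fun k _ h1 h2 => ?_⟩
    by_contra! hc
    exact absurd ((PPset S i).le_max' k ((mem k).2 ⟨h2, hc⟩)) (not_le.2 h1)
  constructor
  · intro hj
    have h : (PPset S i).Nonempty := ⟨j, (mem j).2 ⟨hj.2.2.1, hj.2.2.2.1⟩⟩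
    rw [PP, dif_pos h]
    exact ⟨(key h).unique hj, hj.2.2.1.ne⟩
  · rintro ⟨rfl, hne⟩
    by_cases h : (PPset S i).Nonempty
    · rw [PP, dif_pos h]
      exact key h
    · exact absurd (dif_neg h) hne

/-- The prefix-parent representation is in one-to-one correspondence with the
Cartesian tree: `CT(P) = CT(S)` iff `PP_P(i) = PP_S(i)` for all `i`. -/
theorem ct_eq_iff_pp_eq {β : Type*} [LinearOrder β] (m : ℕ)
    (P : Fin m → α) (S : Fin m → β) :
    CT P = CT S ↔ ∀ i : Fin m, PP P i = PP S i := by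
  rw [CT, CT, ctAux_eq_iff]
  simp only [parentIn_univ_iff]
  constructor
  · intro h i
    by_cases hP : PP P i = i
    · by_contra hne
      exact hne ((h (PP S i) i).2 ⟨rfl, fun hS => hne (hP.trans hS.symm)⟩).1
    · exact ((h (PP P i) i).1 ⟨rfl, hP⟩).1.symm
  · intro h j i
    rw [h]

end CTM
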